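/- arXiv:1812.08723 — 2 statements merged into one kernel-verified Lean document; each statement's English description precedes it below -/
import Mathlib

section
/- Let H₁ and H₂ be Hilbert spaces, let A : H₁ → H₂ be a bounded linear operator, let b ∈ H₂, and let λ > 0. Then the operator AA* + λI on H₂ is invertible with bounded inverse, and the function F(x) = ‖Ax − b‖²_{H₂} + λ‖x‖²_{H₁} has a unique minimizer over H₁, namely x* = A*(AA* + λI)^{−1} b. -/
open scoped RealInnerProductSpace

noncomputable section

open ContinuousLinearMap in
/-- For `c > 0`, the operator `A A* + c I` is invertible. -/
theorem isUnit_comp_adjoint_add_smul_one {𝕜 H₁ H₂ : Type*} [RCLike 𝕜]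
    [NormedAddCommGroup H₁] [InnerProductSpace 𝕜 H₁] [CompleteSpace H₁]
    [NormedAddCommGroup H₂] [InnerProductSpace 𝕜 H₂] [CompleteSpace H₂]
    (A : H₁ →L[𝕜] H₂) {c : ℝ} (hc : 0 < c) :
    IsUnit (A.comp (adjoint A) + (c : 𝕜) • (1 : H₂ →L[𝕜] H₂)) := by
  refine isUnit_of_forall_le_norm_inner_map _ (c := NNReal.mk c hc.le) hc fun x ↦ ?_
  refine le_trans ?_ (RCLike.re_le_norm _)
  have key : RCLike.re (inner 𝕜 ((A.comp (adjoint A) + (c : 𝕜) • (1 : H₂ →L[𝕜] H₂)) x) x) =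
      ‖adjoint A x‖ ^ 2 + c * ‖x‖ ^ 2 := by
    rw [add_apply, comp_apply, smul_apply, one_apply_eq_self, inner_add_left, inner_smul_left,
      ← adjoint_inner_right, map_add, RCLike.conj_ofReal, RCLike.re_ofReal_mul,
      inner_self_eq_norm_sq, inner_self_eq_norm_sq]
  rw [key, NNReal.coe_mk]
  nlinarith [sq_nonneg ‖adjoint A x‖]

open ContinuousLinearMap in
/-- Completing the square: if `(A A* + c I) y = b`, then the Tikhonov functional
`‖A x - b‖² + c ‖x‖²` exceeds its value at `A* y` by `‖A (x - A* y)‖² + c ‖x - A* y‖²`. -/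
theorem tikhonov_eq_add_of_apply_adjoint_add_smul_eq {𝕜 H₁ H₂ : Type*} [RCLike 𝕜]
    [NormedAddCommGroup H₁] [InnerProductSpace 𝕜 H₁] [CompleteSpace H₁]
    [NormedAddCommGroup H₂] [InnerProductSpace 𝕜 H₂] [CompleteSpace H₂]
    (A : H₁ →L[𝕜] H₂) {b y : H₂} {c : ℝ} (hy : A (adjoint A y) + (c : 𝕜) • y = b) (x : H₁) :
    ‖A x - b‖ ^ 2 + c * ‖x‖ ^ 2 =
      (‖A (adjoint A y) - b‖ ^ 2 + c * ‖adjoint A y‖ ^ 2) +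
        (‖A (x - adjoint A y)‖ ^ 2 + c * ‖x - adjoint A y‖ ^ 2) := by
  obtain ⟨h, rfl⟩ : ∃ h, x = adjoint A y + h := ⟨x - adjoint A y, by abel⟩
  have residual : A (adjoint A y) - b = -((c : 𝕜) • y) := by rw [← hy]; abel
  have split : A (adjoint A y + h) - b = -((c : 𝕜) • y) + A h := by
    rw [map_add, ← residual]; abel
  have cross : RCLike.re (inner 𝕜 (-((c : 𝕜) • y)) (A h)) =
      -(c * RCLike.re (inner 𝕜 (adjoint A y) h)) := by
    simp [inner_neg_left, inner_smul_left, adjoint_inner_left]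
  rw [split, residual, add_sub_cancel_left, @norm_add_sq 𝕜, @norm_add_sq 𝕜 _ _ _ _ _ h, cross]
  ring

/-- Lemma C.2 of the paper: let `H₁, H₂` be Hilbert spaces over `𝕜`
(`𝕜 = ℝ` or `ℂ`), `A : H₁ → H₂` a bounded linear operator, `b ∈ H₂` and `λ > 0`.  Then
`AA* + λI` is invertible with bounded inverse, and `F(x) = ‖Ax − b‖² + λ‖x‖²` has the
unique minimizer `x* = A*(AA* + λI)⁻¹ b`. -/
theorem statement4 {𝕜 : Type*} [RCLike 𝕜]
    {H₁ H₂ : Type*}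
    [NormedAddCommGroup H₁] [InnerProductSpace 𝕜 H₁] [CompleteSpace H₁]
    [NormedAddCommGroup H₂] [InnerProductSpace 𝕜 H₂] [CompleteSpace H₂]
    (A : H₁ →L[𝕜] H₂) (b : H₂) (lam : ℝ) (hlam : 0 < lam) :
    ∃ B : H₂ →L[𝕜] H₂,
      -- `AA* + λI` is invertible with bounded inverse `B`
      (A.comp (ContinuousLinearMap.adjoint A) +
          ((lam : 𝕜) • (1 : H₂ →L[𝕜] H₂))).comp B = 1 ∧
      B.comp (A.comp (ContinuousLinearMap.adjoint A) +
          ((lam : 𝕜) • (1 : H₂ →L[𝕜] H₂))) = 1 ∧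
      -- `x* = A*(AA* + λI)⁻¹ b` is the unique minimizer of `F`
      (∀ x : H₁, ‖A (ContinuousLinearMap.adjoint A (B b)) - b‖ ^ 2 +
            lam * ‖ContinuousLinearMap.adjoint A (B b)‖ ^ 2 ≤
          ‖A x - b‖ ^ 2 + lam * ‖x‖ ^ 2) ∧
      (∀ x : H₁, (∀ x' : H₁, ‖A x - b‖ ^ 2 + lam * ‖x‖ ^ 2 ≤
            ‖A x' - b‖ ^ 2 + lam * ‖x'‖ ^ 2) →
          x = ContinuousLinearMap.adjoint A (B b)) := by
  obtain ⟨u, hu⟩ := isUnit_comp_adjoint_add_smul_one A hlam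
  have right_inv : (A.comp (ContinuousLinearMap.adjoint A) +
      ((lam : 𝕜) • (1 : H₂ →L[𝕜] H₂))).comp (↑u⁻¹ : H₂ →L[𝕜] H₂) = 1 := by
    rw [← hu]; exact u.mul_inv
  have left_inv : (↑u⁻¹ : H₂ →L[𝕜] H₂).comp (A.comp (ContinuousLinearMap.adjoint A) +
      ((lam : 𝕜) • (1 : H₂ →L[𝕜] H₂))) = 1 := by
    rw [← hu]; exact u.inv_mul
  have square := tikhonov_eq_add_of_apply_adjoint_add_smul_eq A (b := b)
    (y := (↑u⁻¹ : H₂ →L[𝕜] H₂) b) (DFunLike.congr_fun right_inv b)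
  refine ⟨↑u⁻¹, right_inv, left_inv, fun x ↦ ?_, fun x hx ↦ ?_⟩
  · rw [square x]
    exact le_add_of_nonneg_right (by positivity)
  · have le := hx (ContinuousLinearMap.adjoint A ((↑u⁻¹ : H₂ →L[𝕜] H₂) b))
    rw [square x] at le
    have norm_sq_le : lam * ‖x - ContinuousLinearMap.adjoint A ((↑u⁻¹ : H₂ →L[𝕜] H₂) b)‖ ^ 2 ≤ 0 :=
      by linarith [sq_nonneg ‖A (x - ContinuousLinearMap.adjoint A ((↑u⁻¹ : H₂ →L[𝕜] H₂) b))‖]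
    have norm_sq_eq := le_antisymm (nonpos_of_mul_nonpos_right norm_sq_le hlam) (sq_nonneg _)
    exact sub_eq_zero.mp (norm_eq_zero.mp (pow_eq_zero_iff two_ne_zero |>.mp norm_sq_eq))

end
end

section
/- Let p be a polynomial with complex coefficients of degree at most d, let T > 0, and let t ∈ (0,T). Setting r = min(t, T−t)/T, one has |p(t)|² ≤ ((d+1)/√r) · (1/T)∫₀ᵀ |p(u)|² du. -/
open scoped Real

noncomputable section

open Polynomial Polynomial.Chebyshev in
/-- The polynomials orthogonal for the Bernstein–Szegő weight `√(1 - x²) / |1 - q z²|²`, where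
`x = Re z` and `|z| = 1`. -/
def szegoPoly (q : ℝ) (n : ℕ) : ℂ[X] := U ℂ n - C (q : ℂ) * U ℂ ((n : ℤ) - 2)

/-- `szegoPoly q n` evaluated at `cos φ`, times `sin φ`. -/
def szegoSine (q : ℝ) (n : ℕ) (φ : ℝ) : ℝ :=
  Real.sin ((n + 1) * φ) - q * Real.sin ((n - 1) * φ)

/-- The quantity `|1 - q z²|²` at `z = exp (iφ)`. -/
def szegoDenom (q φ : ℝ) : ℝ := (1 - q) ^ 2 + 4 * q * Real.sin φ ^ 2

theorem szegoPoly_eval_cos_mul_sin (q : ℝ) (n : ℕ) (φ : ℝ) :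
    (szegoPoly q n).eval (Real.cos φ : ℂ) * (Real.sin φ : ℂ) = szegoSine q n φ := by
  have h₁ := Polynomial.Chebyshev.U_complex_cos φ n
  have h₂ := Polynomial.Chebyshev.U_complex_cos φ ((n : ℤ) - 2)
  simp only [szegoPoly, szegoSine, Polynomial.eval_sub, Polynomial.eval_mul, Polynomial.eval_C,
    sub_mul, mul_assoc, Complex.ofReal_cos, Complex.ofReal_sin, h₁, h₂, Complex.ofReal_sub,
    Complex.ofReal_mul]
  push_cast
  ring_nf

theorem degree_szegoPoly {q : ℝ} (hq : 0 < q) (n : ℕ) : (szegoPoly q n).degree = n := by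
  have hq' : (1 + q : ℂ) ≠ 0 := by
    exact_mod_cast (by positivity : (1 + q : ℝ) ≠ 0)
  rcases n with _ | _ | n
  · have : szegoPoly q 0 = Polynomial.C (1 + q : ℂ) := by
      simp [szegoPoly]
    rw [this, Polynomial.degree_C hq']
    rfl
  · have : szegoPoly q 1 = Polynomial.Chebyshev.U ℂ (1 : ℕ) := by
      simp [szegoPoly]
    rw [zero_add, this, Polynomial.Chebyshev.degree_U_natCast]
  · have h : ((n + 1 + 1 : ℕ) : ℤ) - 2 = (n : ℕ) := by push_cast; ring
    rw [szegoPoly, h, Polynomial.degree_sub_eq_left_of_degree_lt,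
      Polynomial.Chebyshev.degree_U_natCast]
    rw [Polynomial.degree_C_mul (by exact_mod_cast hq.ne'),
      Polynomial.Chebyshev.degree_U_natCast, Polynomial.Chebyshev.degree_U_natCast]
    exact_mod_cast (by omega : n < n + 1 + 1)

theorem exists_sum_szegoPoly {q : ℝ} (hq : 0 < q) {d : ℕ} {p : Polynomial ℂ}
    (hp : p.natDegree ≤ d) :
    ∃ c : ℕ → ℂ, p = ∑ n ∈ Finset.range (d + 1), c n • szegoPoly q n := by
  let S : Polynomial.Sequence ℂ := ⟨szegoPoly q, degree_szegoPoly hq⟩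
  have hS := S.span_degreeLT (m := d + 1) fun i _ ↦
    (Polynomial.leadingCoeff_ne_zero.mpr (S.ne_zero i)).isUnit
  have hmem : p ∈ Polynomial.degreeLT ℂ (d + 1) := by
    rw [Polynomial.mem_degreeLT]
    exact (Polynomial.degree_le_of_natDegree_le hp).trans_lt
      (by exact_mod_cast Nat.lt_succ_self d)
  rw [← hS, ← Finset.coe_range, Submodule.mem_span_image_finset_iff_exists_fun'] at hmem
  obtain ⟨c, hc⟩ := hmem
  exact ⟨c, hc.symm⟩

theorem szegoSine_sq_le (q : ℝ) (n : ℕ) (φ : ℝ) : szegoSine q n φ ^ 2 ≤ szegoDenom q φ := by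
  have h : szegoSine q n φ = Real.sin (n * φ) * ((1 - q) * Real.cos φ)
      + Real.cos (n * φ) * ((1 + q) * Real.sin φ) := by
    rw [szegoSine, add_mul, sub_mul, one_mul, Real.sin_add, Real.sin_sub]
    ring
  have h₁ := Real.sin_sq_add_cos_sq (n * φ)
  have h₂ : szegoDenom q φ = ((1 - q) * Real.cos φ) ^ 2 + ((1 + q) * Real.sin φ) ^ 2 := by
    rw [szegoDenom, mul_pow, Real.cos_sq']
    ring
  rw [h, h₂]
  generalize (1 - q) * Real.cos φ = a
  generalize (1 + q) * Real.sin φ = b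
  have h₃ : a ^ 2 + b ^ 2 = (Real.sin (n * φ) ^ 2 + Real.cos (n * φ) ^ 2) * (a ^ 2 + b ^ 2) := by
    rw [h₁, one_mul]
  rw [h₃]
  linarith [sq_nonneg (Real.cos (n * φ) * a - Real.sin (n * φ) * b)]

theorem szegoDenom_pos {q : ℝ} (hq : 0 < q) (hq₁ : q < 1) (φ : ℝ) : 0 < szegoDenom q φ := by
  have : 0 < 1 - q := sub_pos.mpr hq₁
  unfold szegoDenom
  positivity

theorem continuous_szegoSine (q : ℝ) (n : ℕ) : Continuous (szegoSine q n) := by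
  unfold szegoSine
  fun_prop

theorem continuous_szegoDenom (q : ℝ) : Continuous (szegoDenom q) := by
  unfold szegoDenom
  fun_prop

/-- The holomorphic function whose real part on the unit circle is
`2 * szegoSine q (m + k) * szegoSine q m / szegoDenom q`. -/
def szegoKernel (q : ℝ) (m k : ℕ) (z : ℂ) : ℂ :=
  z ^ k - z ^ (2 * m + k) * (z ^ 2 - q) / (1 - q * z ^ 2)

theorem one_sub_mul_sq_ne_zero {q : ℝ} (hq : 0 < q) (hq₁ : q < 1) {z : ℂ} (hz : ‖z‖ ≤ 1) :
    1 - q * z ^ 2 ≠ 0 := by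
  intro h
  have h₁ : ‖(q : ℂ) * z ^ 2‖ = 1 := by rw [← sub_eq_zero.mp h, norm_one]
  rw [norm_mul, norm_pow, Complex.norm_of_nonneg hq.le] at h₁
  have : ‖z‖ ^ 2 ≤ 1 := pow_le_one₀ (norm_nonneg z) hz
  nlinarith

theorem szegoSine_mul_szegoSine_div {q : ℝ} (hq : 0 < q) (hq₁ : q < 1) (m k : ℕ) (φ : ℝ) :
    szegoSine q (m + k) φ * szegoSine q m φ / szegoDenom q φ
      = (szegoKernel q m k (circleMap 0 1 φ)).re / 2 := by
  set z := circleMap 0 1 φ with hz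
  have hnz : ‖z‖ = 1 := by simp [hz]
  set w := (starRingEnd ℂ) z with hw
  have hzw : z * w = 1 := by rw [hw, Complex.mul_conj, Complex.normSq_eq_norm_sq, hnz]; simp
  have hpow (n : ℕ) : z ^ n * w ^ n = 1 := by rw [← mul_pow, hzw, one_pow]
  have hexp : z = Complex.exp (φ * Complex.I) := by simp [hz, circleMap]
  have hexpw : w = Complex.exp (-φ * Complex.I) := by
    rw [hw, hexp, ← Complex.exp_conj]; simp
  have hsine (n : ℕ) : (szegoSine q n φ : ℂ) =
      (w ^ (n + 1) * (1 - q * z ^ 2) - z ^ (n + 1) * (1 - q * w ^ 2)) * Complex.I / 2 := by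
    have e₁ : w ^ (n + 1) = Complex.exp (-((n + 1) * φ) * Complex.I) := by
      rw [hexpw, ← Complex.exp_nat_mul]; push_cast; ring_nf
    have e₂ : z ^ (n + 1) = Complex.exp (((n + 1) * φ) * Complex.I) := by
      rw [hexp, ← Complex.exp_nat_mul]; push_cast; ring_nf
    have e₃ : w ^ (n + 1) * z ^ 2 = Complex.exp (-((n - 1) * φ) * Complex.I) := by
      rw [e₁, hexp, ← Complex.exp_nat_mul, ← Complex.exp_add]; push_cast; ring_nf
    have e₄ : z ^ (n + 1) * w ^ 2 = Complex.exp (((n - 1) * φ) * Complex.I) := by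
      rw [e₂, hexpw, ← Complex.exp_nat_mul, ← Complex.exp_add]; push_cast; ring_nf
    rw [szegoSine]
    push_cast
    rw [Complex.sin, Complex.sin, ← e₁, ← e₂, ← e₃, ← e₄]
    ring
  have hH := one_sub_mul_sq_ne_zero hq hq₁ hnz.le
  have hH' : 1 - q * w ^ 2 ≠ 0 :=
    one_sub_mul_sq_ne_zero hq hq₁ (by rw [hw, RCLike.norm_conj, hnz])
  have hden : (szegoDenom q φ : ℂ) = (1 - q * z ^ 2) * (1 - q * w ^ 2) := by
    have hsin : Complex.sin φ = (w - z) * Complex.I / 2 := by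
      rw [Complex.sin, hexp, hexpw]
    rw [szegoDenom]
    push_cast
    rw [hsin]
    linear_combination (-q * (q * (z * w + 1) - 2)) * hzw + q * (w - z) ^ 2 * Complex.I_sq
  have hconj : (starRingEnd ℂ) (szegoKernel q m k z) = szegoKernel q m k w := by
    simp [szegoKernel, hw]
  have hre : ((szegoKernel q m k z).re : ℂ) =
      (szegoKernel q m k z + szegoKernel q m k w) / 2 := by
    rw [← hconj, Complex.re_eq_add_conj]
  apply Complex.ofReal_injective
  push_cast
  rw [hre, hden, hsine, hsine, szegoKernel, szegoKernel, div_eq_iff (mul_ne_zero hH hH')]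
  have e₁ : z ^ 2 - q = z ^ 2 * (1 - q * w ^ 2) := by
    linear_combination (q * (z * w + 1)) * hzw
  have e₂ : w ^ 2 - q = w ^ 2 * (1 - q * z ^ 2) := by
    linear_combination (q * (z * w + 1)) * hzw
  rw [e₁, e₂]
  generalize 1 - q * z ^ 2 = H at *
  generalize 1 - q * w ^ 2 = H' at *
  field_simp
  linear_combination (w ^ (m + k + 1) * H - z ^ (m + k + 1) * H') *
    (w ^ (m + 1) * H - z ^ (m + 1) * H') * Complex.I_sq + H * H' * (z ^ k + w ^ k) * hpow (m + 1)

theorem integral_szegoSine_mul_szegoSine {q : ℝ} (hq : 0 < q) (hq₁ : q < 1) (m k : ℕ) :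
    ∫ φ in 0..2 * π, szegoSine q (m + k) φ * szegoSine q m φ / szegoDenom q φ
      = π * (szegoKernel q m k 0).re := by
  have hdiff : DifferentiableOn ℂ (szegoKernel q m k) (Metric.closedBall 0 1) := by
    intro z hz
    have := one_sub_mul_sq_ne_zero hq hq₁ (mem_closedBall_zero_iff.mp hz)
    unfold szegoKernel
    apply DifferentiableAt.differentiableWithinAt
    fun_prop (disch := assumption)
  have hcont : Continuous fun φ : ℝ ↦ szegoKernel q m k (circleMap 0 1 φ) :=
    hdiff.continuousOn.comp_continuous (continuous_circleMap 0 1) fun φ ↦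
      circleMap_mem_closedBall 0 zero_le_one φ
  have havg : Real.circleAverage (szegoKernel q m k) 0 1 = szegoKernel q m k 0 := by
    apply circleAverage_of_differentiable_on_off_countable Set.countable_empty
    · simpa using hdiff.continuousOn
    · intro z hz
      refine hdiff.differentiableAt (Metric.closedBall_mem_nhds_of_mem ?_)
      simpa using hz
  simp only [szegoSine_mul_szegoSine_div hq hq₁]
  have hre : (∫ φ in 0..2 * π, szegoKernel q m k (circleMap 0 1 φ)).re
      = ∫ φ in 0..2 * π, (szegoKernel q m k (circleMap 0 1 φ)).re :=
    (Complex.reCLM.intervalIntegral_comp_comm (hcont.intervalIntegrable _ _)).symm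
  rw [intervalIntegral.integral_div, ← hre, ← havg, Real.circleAverage_def, Complex.real_smul,
    Complex.re_ofReal_mul]
  field_simp

theorem integral_szegoSine_mul_of_ne {q : ℝ} (hq : 0 < q) (hq₁ : q < 1) {n m : ℕ} (h : n ≠ m) :
    ∫ φ in 0..2 * π, szegoSine q n φ * szegoSine q m φ / szegoDenom q φ = 0 := by
  wlog hmn : m < n generalizing n m
  · simpa only [mul_comm] using this h.symm (by omega)
  obtain ⟨k, rfl⟩ := Nat.exists_eq_add_of_lt hmn
  rw [add_assoc, integral_szegoSine_mul_szegoSine hq hq₁]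
  simp [szegoKernel]

theorem pi_le_integral_szegoSine_sq {q : ℝ} (hq : 0 < q) (hq₁ : q < 1) (n : ℕ) :
    π ≤ ∫ φ in 0..2 * π, szegoSine q n φ * szegoSine q n φ / szegoDenom q φ := by
  have h := integral_szegoSine_mul_szegoSine hq hq₁ n 0
  rw [add_zero] at h
  rw [h, le_mul_iff_one_le_right Real.pi_pos]
  rcases n with _ | n <;> simp [szegoKernel, hq.le]

theorem pi_mul_sum_norm_sq_le_integral {q : ℝ} (hq : 0 < q) (hq₁ : q < 1) (s : Finset ℕ)
    (c : ℕ → ℂ) :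
    π * ∑ n ∈ s, ‖c n‖ ^ 2 ≤
      ∫ φ in 0..2 * π, ‖∑ n ∈ s, c n * szegoSine q n φ‖ ^ 2 / szegoDenom q φ := by
  have hexpand (φ : ℝ) : ‖∑ n ∈ s, c n * szegoSine q n φ‖ ^ 2 / szegoDenom q φ =
      ∑ n ∈ s, ∑ m ∈ s, (c n * (starRingEnd ℂ) (c m)).re *
        (szegoSine q n φ * szegoSine q m φ / szegoDenom q φ) := by
    have h : ‖∑ n ∈ s, c n * szegoSine q n φ‖ ^ 2 =
        ∑ n ∈ s, ∑ m ∈ s, (c n * (starRingEnd ℂ) (c m)).re *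
          (szegoSine q n φ * szegoSine q m φ) := by
      rw [← Complex.normSq_eq_norm_sq, ← Complex.ofReal_re (Complex.normSq _),
        ← Complex.mul_conj, map_sum, Finset.sum_mul_sum, Complex.re_sum]
      refine Finset.sum_congr rfl fun n _ ↦ ?_
      rw [Complex.re_sum]
      refine Finset.sum_congr rfl fun m _ ↦ ?_
      rw [← Complex.re_mul_ofReal, map_mul, Complex.conj_ofReal, Complex.ofReal_mul]
      congr 1
      ring
    simp only [h, Finset.sum_div, mul_div_assoc]
  have hcont (n m : ℕ) : Continuous fun φ ↦ (c n * (starRingEnd ℂ) (c m)).re *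
      (szegoSine q n φ * szegoSine q m φ / szegoDenom q φ) :=
    continuous_const.mul (((continuous_szegoSine q n).mul (continuous_szegoSine q m)).div
      (continuous_szegoDenom q) fun φ ↦ (szegoDenom_pos hq hq₁ φ).ne')
  simp only [hexpand]
  rw [intervalIntegral.integral_finsetSum fun n _ ↦
    (continuous_finsetSum s fun m _ ↦ hcont n m).intervalIntegrable _ _, Finset.mul_sum]
  refine Finset.sum_le_sum fun n hn ↦ ?_
  rw [intervalIntegral.integral_finsetSum fun m _ ↦ (hcont n m).intervalIntegrable _ _,
    Finset.sum_eq_single_of_mem n hn]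
  · rw [intervalIntegral.integral_const_mul, Complex.mul_conj, Complex.ofReal_re,
      Complex.normSq_eq_norm_sq, mul_comm]
    exact mul_le_mul_of_nonneg_left (pi_le_integral_szegoSine_sq hq hq₁ n) (by positivity)
  · intro m _ hmn
    rw [intervalIntegral.integral_const_mul, integral_szegoSine_mul_of_ne hq hq₁ hmn.symm,
      mul_zero]

theorem norm_sq_sum_szegoSine_le (q : ℝ) (d : ℕ) (c : ℕ → ℂ) (θ : ℝ) :
    ‖∑ n ∈ Finset.range (d + 1), c n * szegoSine q n θ‖ ^ 2 ≤
      (d + 1) * szegoDenom q θ * ∑ n ∈ Finset.range (d + 1), ‖c n‖ ^ 2 := by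
  calc ‖∑ n ∈ Finset.range (d + 1), c n * szegoSine q n θ‖ ^ 2
      ≤ (∑ n ∈ Finset.range (d + 1), ‖c n‖ * |szegoSine q n θ|) ^ 2 := by
        gcongr
        refine (norm_sum_le _ _).trans_eq (Finset.sum_congr rfl fun n _ ↦ ?_)
        rw [norm_mul, Complex.norm_real, Real.norm_eq_abs]
    _ ≤ (∑ n ∈ Finset.range (d + 1), ‖c n‖ ^ 2) *
          ∑ n ∈ Finset.range (d + 1), |szegoSine q n θ| ^ 2 :=
        Finset.sum_mul_sq_le_sq_mul_sq _ _ _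
    _ ≤ (∑ n ∈ Finset.range (d + 1), ‖c n‖ ^ 2) *
          ∑ _n ∈ Finset.range (d + 1), szegoDenom q θ := by
        gcongr with n
        rw [sq_abs]
        exact szegoSine_sq_le q n θ
    _ = (d + 1) * szegoDenom q θ * ∑ n ∈ Finset.range (d + 1), ‖c n‖ ^ 2 := by
        rw [Finset.sum_const, Finset.card_range, nsmul_eq_mul]
        push_cast
        ring

theorem integral_zero_two_pi_eq_two_mul {f : ℝ → ℝ} (hf : Continuous f)
    (hsymm : ∀ φ, f (2 * π - φ) = f φ) : ∫ φ in 0..2 * π, f φ = 2 * ∫ φ in 0..π, f φ := by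
  have h : ∫ φ in π..2 * π, f φ = ∫ φ in 0..π, f φ := by
    have := intervalIntegral.integral_comp_sub_left f (2 * π) (a := 0) (b := π)
    simp only [hsymm, sub_zero] at this
    rw [this]
    ring_nf
  rw [← intervalIntegral.integral_add_adjacent_intervals (hf.intervalIntegrable 0 π)
    (hf.intervalIntegrable π (2 * π)), h, two_mul]

/-- The parameter `q` is chosen so that, by AM-GM, the Bernstein–Szegő weight lies below a constant
multiple of Lebesgue measure, with equality where `sin φ = s`. -/
theorem exists_szegoDenom_eq {s : ℝ} (hs : 0 < s) :
    ∃ q, 0 < q ∧ q < 1 ∧ ∀ φ, szegoDenom q φ = 4 * q * (s ^ 2 + Real.sin φ ^ 2) := by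
  have ha : √(1 + s ^ 2) ^ 2 = 1 + s ^ 2 := Real.sq_sqrt (by positivity)
  have has : s < √(1 + s ^ 2) := Real.lt_sqrt_of_sq_lt (by linarith)
  have hlt : √(1 + s ^ 2) - s < 1 := by nlinarith
  generalize √(1 + s ^ 2) = a at *
  refine ⟨(a - s) ^ 2, pow_pos (sub_pos.mpr has) 2,
    pow_lt_one₀ (sub_nonneg.mpr has.le) hlt two_ne_zero, fun φ ↦ ?_⟩
  have h : 1 - (a - s) ^ 2 = 2 * s * (a - s) := by linear_combination -ha
  rw [szegoDenom, h]
  ring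

/-- Pointwise bound on `(-1, 1)` for a polynomial of degree at most `d` by its `L²` norm. -/
theorem norm_sq_eval_cos_le {p : Polynomial ℂ} {d : ℕ} (hd : p.natDegree ≤ d) {θ : ℝ}
    (hθ : 0 < Real.sin θ) :
    ‖p.eval (Real.cos θ : ℂ)‖ ^ 2 ≤
      (d + 1) * (2 / (π * Real.sin θ)) * ∫ x in (-1 : ℝ)..1, ‖p.eval (x : ℂ)‖ ^ 2 := by
  obtain ⟨q, hq, hq₁, hden⟩ := exists_szegoDenom_eq hθ
  obtain ⟨c, hc⟩ := exists_sum_szegoPoly hq hd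
  have hF (φ : ℝ) : ∑ n ∈ Finset.range (d + 1), c n * szegoSine q n φ =
      p.eval (Real.cos φ : ℂ) * Real.sin φ := by
    rw [hc, Polynomial.eval_finsetSum, Finset.sum_mul]
    refine Finset.sum_congr rfl fun n _ ↦ ?_
    rw [Polynomial.eval_smul, smul_eq_mul, mul_assoc, szegoPoly_eval_cos_mul_sin]
  have hpt := norm_sq_sum_szegoSine_le q d c θ
  have hL := pi_mul_sum_norm_sq_le_integral hq hq₁ (Finset.range (d + 1)) c
  simp only [hF, norm_mul, Complex.norm_real, Real.norm_eq_abs, mul_pow, sq_abs] at hpt hL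
  have hcont : Continuous fun φ : ℝ ↦
      ‖p.eval (Real.cos φ : ℂ)‖ ^ 2 * Real.sin φ ^ 2 / szegoDenom q φ := by
    refine Continuous.div ?_ (continuous_szegoDenom q) fun φ ↦ (szegoDenom_pos hq hq₁ φ).ne'
    fun_prop
  have hsubst : ∫ φ in 0..π, ‖p.eval (Real.cos φ : ℂ)‖ ^ 2 * Real.sin φ =
      ∫ x in (-1 : ℝ)..1, ‖p.eval (x : ℂ)‖ ^ 2 := by
    have := intervalIntegral.integral_comp_mul_deriv (a := 0) (b := π) (f := Real.cos)
      (f' := fun φ ↦ -Real.sin φ) (g := fun x ↦ ‖p.eval (x : ℂ)‖ ^ 2)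
      (fun φ _ ↦ Real.hasDerivAt_cos φ) (by fun_prop) (by fun_prop)
    simp only [Function.comp_apply, mul_neg, intervalIntegral.integral_neg, Real.cos_zero,
      Real.cos_pi] at this
    rw [intervalIntegral.integral_symm 1 (-1), ← this, neg_neg]
  have hmono : ∫ φ in 0..π, ‖p.eval (Real.cos φ : ℂ)‖ ^ 2 * Real.sin φ ^ 2 / szegoDenom q φ ≤
      (1 / (8 * q * Real.sin θ)) * ∫ x in (-1 : ℝ)..1, ‖p.eval (x : ℂ)‖ ^ 2 := by
    rw [← hsubst, ← intervalIntegral.integral_const_mul]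
    refine intervalIntegral.integral_mono_on Real.pi_pos.le (hcont.intervalIntegrable _ _)
      (Continuous.intervalIntegrable (by fun_prop) _ _) fun φ hφ ↦ ?_
    have hsin := Real.sin_nonneg_of_mem_Icc hφ
    rw [div_le_iff₀ (szegoDenom_pos hq hq₁ φ), hden, one_div_mul_eq_div, div_mul_eq_mul_div,
      le_div_iff₀ (by positivity)]
    have hamgm := two_mul_le_add_sq (Real.sin θ) (Real.sin φ)
    have : 0 ≤ ‖p.eval (Real.cos φ : ℂ)‖ ^ 2 * Real.sin φ * (4 * q) := by positivity
    nlinarith [mul_le_mul_of_nonneg_left hamgm this]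
  rw [integral_zero_two_pi_eq_two_mul hcont fun φ ↦ by
    simp [szegoDenom, Real.cos_two_pi_sub, Real.sin_two_pi_sub]] at hL
  set J := ∫ x in (-1 : ℝ)..1, ‖p.eval (x : ℂ)‖ ^ 2
  have hsum : ∑ n ∈ Finset.range (d + 1), ‖c n‖ ^ 2 ≤
      1 / π * (2 * (1 / (8 * q * Real.sin θ) * J)) := by
    rw [one_div_mul_eq_div, le_div_iff₀ Real.pi_pos]
    linarith
  have hfinal := hpt.trans (mul_le_mul_of_nonneg_left hsum
    (mul_nonneg (by positivity) (szegoDenom_pos hq hq₁ θ).le))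
  rw [← le_div_iff₀ (by positivity), hden] at hfinal
  refine hfinal.trans_eq ?_
  field_simp
  ring

theorem two_mul_min_div_le_sin_arccos_sq {T t : ℝ} (hT : 0 < T) (ht : t ∈ Set.Ioo 0 T) :
    2 * (min t (T - t) / T) ≤ Real.sin (Real.arccos (2 * t / T - 1)) ^ 2 := by
  have ht₀ := ht.1
  have htT := sub_pos.mpr ht.2
  have hx : 1 - (2 * t / T - 1) ^ 2 = 4 * t * (T - t) / T ^ 2 := by
    field_simp
    ring
  rw [Real.sin_arccos, hx, Real.sq_sqrt (by positivity), ← mul_div_assoc,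
    div_le_div_iff₀ hT (by positivity)]
  have hmin : min t (T - t) * T ≤ 2 * t * (T - t) := by
    rcases le_total t (T - t) with h | h
    · rw [min_eq_left h]
      nlinarith
    · rw [min_eq_right h]
      nlinarith
  nlinarith [mul_le_mul_of_nonneg_right hmin hT.le]

/-- Claim E.2, a Bernstein-type smoothness bound for low-degree
polynomials: for a complex polynomial `p` of degree at most `d`, `T > 0` and
`t ∈ (0,T)`, with `r = min(t, T−t)/T`, one has
`|p(t)|² ≤ ((d+1)/√r) ⋅ (1/T)∫₀ᵀ |p(u)|² du`. -/
theorem statement14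
    (p : Polynomial ℂ) (d : ℕ) (hd : p.natDegree ≤ d)
    (T t : ℝ) (hT : 0 < T) (ht : t ∈ Set.Ioo (0 : ℝ) T) :
    ‖p.eval (t : ℂ)‖ ^ 2 ≤
      ((d + 1 : ℝ) / Real.sqrt (min t (T - t) / T)) *
        ((1 / T) * ∫ u in Set.Icc (0 : ℝ) T, ‖p.eval (u : ℂ)‖ ^ 2) := by
  have hr : 0 < min t (T - t) / T := div_pos (lt_min ht.1 (sub_pos.mpr ht.2)) hT
  have hsin_sq := two_mul_min_div_le_sin_arccos_sq hT ht
  set r := min t (T - t) / T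
  set θ := Real.arccos (2 * t / T - 1)
  have hcos : Real.cos θ = 2 * t / T - 1 := by
    have h₀ : 0 < t / T := div_pos ht.1 hT
    have h₁ : t / T < 1 := (div_lt_one hT).mpr ht.2
    have h₂ : 2 * t / T = 2 * (t / T) := mul_div_assoc _ _ _
    exact Real.cos_arccos (by linarith) (by linarith)
  have hsin : 0 < Real.sin θ :=
    (Real.sin_nonneg_of_mem_Icc ⟨Real.arccos_nonneg _, Real.arccos_le_pi _⟩).lt_of_ne'
      fun h ↦ by rw [h] at hsin_sq; linarith
  set P := p.comp (Polynomial.C (T / 2 : ℂ) * Polynomial.X + Polynomial.C (T / 2 : ℂ))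
  have hP (x : ℝ) : P.eval (x : ℂ) = p.eval ((T / 2 * x + T / 2 : ℝ) : ℂ) := by
    simp [P]
  have hPdeg : P.natDegree ≤ d := by
    refine (Polynomial.natDegree_comp_le.trans ?_).trans hd
    exact (Nat.mul_le_mul_left _ Polynomial.natDegree_linear_le).trans_eq (mul_one _)
  have hbound := norm_sq_eval_cos_le hPdeg hsin
  have hval : T / 2 * (2 * t / T - 1) + T / 2 = t := by
    field_simp
    ring
  simp only [hP] at hbound
  rw [hcos, hval, intervalIntegral.integral_comp_mul_add (fun u : ℝ ↦ ‖p.eval (u : ℂ)‖ ^ 2)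
    (by positivity : T / 2 ≠ 0), show T / 2 * -1 + T / 2 = 0 by ring,
    show T / 2 * 1 + T / 2 = T by ring, smul_eq_mul,
    intervalIntegral.integral_of_le hT.le, ← MeasureTheory.integral_Icc_eq_integral_Ioc] at hbound
  have hconst : 4 / (π * Real.sin θ) ≤ 1 / √r := by
    rw [div_le_div_iff₀ (by positivity) (Real.sqrt_pos.mpr hr), one_mul]
    refine le_of_sq_le_sq ?_ (by positivity)
    rw [mul_pow, mul_pow, Real.sq_sqrt hr.le]
    have hpi : (9 : ℝ) ≤ π ^ 2 := by nlinarith [Real.pi_gt_three]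
    nlinarith
  have hI : 0 ≤ ∫ u in Set.Icc (0 : ℝ) T, ‖p.eval (u : ℂ)‖ ^ 2 :=
    MeasureTheory.integral_nonneg fun u ↦ by positivity
  set I := ∫ u in Set.Icc (0 : ℝ) T, ‖p.eval (u : ℂ)‖ ^ 2
  calc ‖p.eval (t : ℂ)‖ ^ 2
      ≤ (d + 1) * (2 / (π * Real.sin θ)) * ((T / 2)⁻¹ * I) := hbound
    _ = (d + 1) * (4 / (π * Real.sin θ)) * (1 / T * I) := by
        field_simp
        ring
    _ ≤ (d + 1) * (1 / √r) * (1 / T * I) := by gcongr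
    _ = (d + 1) / √r * (1 / T * I) := by rw [mul_one_div]

end
end
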